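/- Let β > 2, ρ > 0, α_N = N^{−ρ}, and 0 < κ < 1/2. Writing S(σ) := ∑_{i∈B₁} σᵢ σ_{i+N/2}, one has uniformly over all admissible (μ₁, μ₂) ∈ A_κ^N: for every δ > 0, limsup_{N→∞} sup_{(μ₁,μ₂)} (1/(α_N N)) | log E_{ν_N^{μ₁,μ₂}}[exp(α_N S)] − (α_N N / 2)·μ₁μ₂ | ≤ δ; in particular log E_{ν_N^{μ₁,μ₂}}[exp(α_N S)] = (α_N N / 2)·μ₁μ₂ + o(α_N N) uniformly over admissible (μ₁,μ₂) ∈ A_κ^N. -/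

import Mathlib

open MeasureTheory Filter

noncomputable section

/-- The spin value ±1 associated to a Boolean. -/
def spinVal (s : Bool) : ℝ := if s then 1 else -1

/-- A spin configuration on `N = 2n` sites, split into the two blocks
`B₁` (first component) and `B₂` (second component); the perfect matching
pairs the `i`-th spin of `B₁` with the `i`-th spin of `B₂`. -/
abbrev TwoConf (n : ℕ) := (Fin n → Bool) × (Fin n → Bool)

/-- Block magnetization `m₁(σ) = (2/N) ∑_{i ∈ B₁} σᵢ` with `N = 2n`. -/
def mag1 (n : ℕ) (σ : TwoConf n) : ℝ := (2 / (2 * n : ℝ)) * ∑ i, spinVal (σ.1 i)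

/-- Block magnetization `m₂(σ) = (2/N) ∑_{i ∈ B₂} σᵢ` with `N = 2n`. -/
def mag2 (n : ℕ) (σ : TwoConf n) : ℝ := (2 / (2 * n : ℝ)) * ∑ i, spinVal (σ.2 i)

/-- Membership in the typical set `A_κ^N ⊆ [−1,1]²`: the union over sign choices
`s₁, s₂ ∈ {+,−}` of the open squares of half-width `N^{−κ}` centered at
`(m^{s₁}(β/2), m^{s₂}(β/2))`, where `mp = m⁺(β/2)` and `m⁻(β/2) = −mp`. -/
def memTyp (mp κ : ℝ) (N : ℕ) (x : ℝ × ℝ) : Prop :=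
  ∃ s₁ s₂ : Bool,
    |x.1 - (if s₁ then mp else -mp)| < (N : ℝ) ^ (-κ) ∧
    |x.2 - (if s₂ then mp else -mp)| < (N : ℝ) ^ (-κ)

/-- The pair `(μ₁, μ₂)` is admissible for system size `N`: both `N(1+μ₁)/4` and
`N(1+μ₂)/4` are natural numbers. -/
def admissible (N : ℕ) (μ₁ μ₂ : ℝ) : Prop :=
  (∃ k : ℕ, (N : ℝ) * (1 + μ₁) / 4 = k) ∧ ∃ k : ℕ, (N : ℝ) * (1 + μ₂) / 4 = k

/-- The probability of the event `A` under the uniform measure `ν_N^{μ₁,μ₂}` on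
`Ω_N(μ₁,μ₂) = {σ : m₁(σ) = μ₁, m₂(σ) = μ₂}` (with `N = 2n`). -/
def nuProb (n : ℕ) (μ₁ μ₂ : ℝ) (A : Set (TwoConf n)) : ℝ :=
  (∑ σ : TwoConf n,
      ({σ : TwoConf n | mag1 n σ = μ₁ ∧ mag2 n σ = μ₂} ∩ A).indicator
        (fun _ => (1 : ℝ)) σ) /
    ∑ σ : TwoConf n,
      {σ : TwoConf n | mag1 n σ = μ₁ ∧ mag2 n σ = μ₂}.indicator (fun _ => (1 : ℝ)) σ

/-- The expectation of `g` under the uniform measure `ν_N^{μ₁,μ₂}` on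
`Ω_N(μ₁,μ₂)` (with `N = 2n`). -/
def nuExp (n : ℕ) (μ₁ μ₂ : ℝ) (g : TwoConf n → ℝ) : ℝ :=
  (∑ σ : TwoConf n, {σ : TwoConf n | mag1 n σ = μ₁ ∧ mag2 n σ = μ₂}.indicator g σ) /
    ∑ σ : TwoConf n,
      {σ : TwoConf n | mag1 n σ = μ₁ ∧ mag2 n σ = μ₂}.indicator (fun _ => (1 : ℝ)) σ

lemma card_superset (n k : ℕ) (A : Finset (Fin n)) (h : A.card ≤ k) :
    ((Finset.powersetCard k (Finset.univ : Finset (Fin n))).filter (fun s => A ⊆ s)).card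
      = (n - A.card).choose (k - A.card) := by
  have : (n - A.card) = (Finset.univ \ A).card := by
    rw [Finset.card_sdiff_of_subset (Finset.subset_univ _)]; simp
  rw [this, ← Finset.card_powersetCard]
  refine Finset.card_bij' (fun s _ => s \ A) (fun s _ => s ∪ A) ?_ ?_ ?_ ?_
  · intro s hs
    simp only [Finset.mem_filter, Finset.mem_powersetCard] at hs ⊢
    refine ⟨Finset.sdiff_subset_sdiff hs.1.1 (le_refl _), ?_⟩
    rw [Finset.card_sdiff_of_subset hs.2, hs.1.2]
  · intro s hs
    simp only [Finset.mem_filter, Finset.mem_powersetCard] at hs ⊢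
    refine ⟨⟨Finset.subset_univ _, ?_⟩, Finset.subset_union_right⟩
    have hd : Disjoint s A := by
      rw [Finset.disjoint_left]; intro a ha
      exact (Finset.mem_sdiff.1 (hs.1 ha)).2
    rw [Finset.card_union_of_disjoint hd, hs.2]; omega
  · intro s hs
    simp only [Finset.mem_filter] at hs
    exact Finset.sdiff_union_of_subset hs.2
  · intro s hs
    simp only [Finset.mem_powersetCard] at hs
    ext a
    have := @hs.1 a
    simp only [Finset.mem_sdiff, Finset.mem_union, Finset.mem_univ, true_and] at this ⊢
    tauto

lemma card_superset_zero (n k : ℕ) (A : Finset (Fin n)) (h : k < A.card) :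
    ((Finset.powersetCard k (Finset.univ : Finset (Fin n))).filter (fun s => A ⊆ s)).card = 0 := by
  rw [Finset.card_eq_zero, Finset.filter_eq_empty_iff]
  intro s hs hA
  have := Finset.card_le_card hA
  rw [(Finset.mem_powersetCard.1 hs).2] at this
  omega

lemma choose_bound (n k a : ℕ) (hk : k ≤ n) (ha : a ≤ k) :
    ((n - a).choose (k - a) : ℝ) ≤ n.choose k * ((k : ℝ) / n) ^ a := by
  induction a with
  | zero => simp
  | succ a ih =>
    have ih := ih (by omega)
    obtain ⟨j, rfl⟩ : ∃ j, k = a + 1 + j := ⟨k - (a+1), by omega⟩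
    obtain ⟨m, rfl⟩ : ∃ m, n = a + 1 + m := ⟨n - (a+1), by omega⟩
    have e1 : a + 1 + m - (a + 1) = m := by omega
    have e2 : a + 1 + j - (a + 1) = j := by omega
    have e3 : a + 1 + m - a = m + 1 := by omega
    have e4 : a + 1 + j - a = j + 1 := by omega
    rw [e3, e4] at ih
    rw [e1, e2, pow_succ, ← mul_assoc]
    have h1 := Nat.add_one_mul_choose_eq m j
    have h1' : ((m:ℝ) + 1) * m.choose j = (m+1).choose (j+1) * ((j:ℝ)+1) := by exact_mod_cast h1
    have h2 : (m.choose j : ℝ) = (m+1).choose (j+1) * (((j:ℝ)+1) / (m+1)) := by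
      field_simp; linarith
    rw [h2]
    have hjm : (j:ℝ) ≤ m := by exact_mod_cast (by omega : j ≤ m)
    gcongr ?_ * ?_
    rw [div_le_div_iff₀ (by positivity) (by positivity)]
    push_cast
    have : (0:ℝ) ≤ a := by positivity
    nlinarith

lemma count_bound (n k : ℕ) (hk : k ≤ n) (A : Finset (Fin n)) :
    (((Finset.powersetCard k (Finset.univ : Finset (Fin n))).filter (fun s => A ⊆ s)).card : ℝ)
      ≤ n.choose k * ((k : ℝ) / n) ^ A.card := by
  rcases le_or_gt A.card k with h | h
  · rw [card_superset n k A h]; exact choose_bound n k _ hk h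
  · rw [card_superset_zero n k A h]; push_cast; positivity

lemma upper_sum (n k : ℕ) (hk : k ≤ n) (t : Finset (Fin n)) (c : ℝ) (hc : 0 ≤ c) :
    ∑ s ∈ Finset.powersetCard k (Finset.univ : Finset (Fin n)), (1 + c) ^ (s ∩ t).card
      ≤ n.choose k * (1 + c * ((k : ℝ) / n)) ^ t.card := by
  have e : ∀ (u : Finset (Fin n)) (d : ℝ), (1 + d) ^ u.card = ∑ A ∈ u.powerset, d ^ A.card := by
    intro u d
    rw [add_comm, ← Finset.sum_pow_mul_eq_add_pow]; simp
  have e2 : ∀ s : Finset (Fin n), (1 + c) ^ (s ∩ t).card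
      = ∑ A ∈ t.powerset, if A ⊆ s then c ^ A.card else 0 := by
    intro s
    rw [e, ← Finset.sum_filter]
    refine Finset.sum_congr ?_ (fun _ _ => rfl)
    ext A
    simp only [Finset.mem_powerset, Finset.mem_filter, Finset.subset_inter_iff]
    tauto
  simp_rw [e2]
  rw [Finset.sum_comm, e t, Finset.mul_sum]
  refine Finset.sum_le_sum (fun A _ => ?_)
  rw [← Finset.sum_filter, Finset.sum_const, nsmul_eq_mul, mul_pow]
  have := mul_le_mul_of_nonneg_right (count_bound n k hk A) (pow_nonneg hc A.card)
  linarith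

lemma mean_sum (n k : ℕ) (hn : 0 < n) (hk : k ≤ n) (t : Finset (Fin n)) :
    ∑ s ∈ Finset.powersetCard k (Finset.univ : Finset (Fin n)), ((s ∩ t).card : ℝ)
      = n.choose k * ((k : ℝ) / n) * t.card := by
  have e2 : ∀ s : Finset (Fin n), ((s ∩ t).card : ℝ)
      = ∑ i ∈ t, if {i} ⊆ s then (1:ℝ) else 0 := by
    intro s
    rw [← Finset.sum_filter, Finset.sum_const, nsmul_eq_mul, mul_one]
    congr 2
    ext i; simp [and_comm]
  simp_rw [e2]
  rw [Finset.sum_comm]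
  have : ∀ i ∈ t, (∑ s ∈ Finset.powersetCard k (Finset.univ : Finset (Fin n)),
      if {i} ⊆ s then (1:ℝ) else 0) = n.choose k * ((k : ℝ) / n) := by
    intro i _
    rw [← Finset.sum_filter, Finset.sum_const, nsmul_eq_mul, mul_one]
    rcases Nat.eq_zero_or_pos k with rfl | hk0
    · rw [card_superset_zero _ _ _ (by simp)]; simp
    · rw [card_superset _ _ _ (by rw [Finset.card_singleton]; omega)]
      obtain ⟨m, rfl⟩ : ∃ m, n = m + 1 := ⟨n - 1, by omega⟩
      obtain ⟨j, rfl⟩ : ∃ j, k = j + 1 := ⟨k - 1, by omega⟩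
      have h1 := Nat.add_one_mul_choose_eq m j
      have h1' : ((m:ℝ) + 1) * m.choose j = (m+1).choose (j+1) * ((j:ℝ)+1) := by exact_mod_cast h1
      simp only [Finset.card_singleton, Nat.add_sub_cancel]
      push_cast
      field_simp; linarith
  rw [Finset.sum_congr rfl this, Finset.sum_const, nsmul_eq_mul]; ring

/-- Set of plus spins. -/
def plusSet {n : ℕ} (x : Fin n → Bool) : Finset (Fin n) := Finset.univ.filter (fun i => x i = true)

def confK (n k : ℕ) : Finset (Fin n → Bool) := Finset.univ.filter (fun x => (plusSet x).card = k)

lemma sum_confK (n k : ℕ) (F : Finset (Fin n) → ℝ) :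
    ∑ x ∈ confK n k, F (plusSet x) = ∑ s ∈ Finset.powersetCard k Finset.univ, F s := by
  refine Finset.sum_bij' (fun x _ => plusSet x) (fun s _ => fun i => decide (i ∈ s)) ?_ ?_ ?_ ?_ ?_
  · intro x hx; simpa [confK, Finset.mem_powersetCard] using hx
  · intro s hs
    rw [confK, Finset.mem_filter]
    simpa [plusSet, Finset.mem_powersetCard] using hs
  · intro x hx; ext i; simp [plusSet]
  · intro s hs; ext i; simp [plusSet]
  · intros; rfl

lemma card_confK (n k : ℕ) : ((confK n k).card : ℝ) = n.choose k := by
  have := sum_confK n k (fun _ => 1)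
  simpa using this

lemma sum_spin {n : ℕ} (x : Fin n → Bool) :
    ∑ i, spinVal (x i) = 2 * ((plusSet x).card : ℝ) - n := by
  have h : ∀ i, spinVal (x i) = 2 * (if x i = true then (1:ℝ) else 0) - 1 := by
    intro i; unfold spinVal; split_ifs <;> norm_num
  simp_rw [h]
  rw [Finset.sum_sub_distrib, ← Finset.mul_sum, ← Finset.sum_filter]
  simp [plusSet]

lemma sum_spin_mul {n : ℕ} (x y : Fin n → Bool) :
    ∑ i, spinVal (x i) * spinVal (y i) = 4 * ((plusSet x ∩ plusSet y).card : ℝ)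
      - 2 * (plusSet x).card - 2 * (plusSet y).card + n := by
  have h : ∀ i, spinVal (x i) * spinVal (y i)
      = 4 * (if (x i = true ∧ y i = true) then (1:ℝ) else 0)
        - 2 * (if x i = true then (1:ℝ) else 0) - 2 * (if y i = true then (1:ℝ) else 0) + 1 := by
    intro i; unfold spinVal
    cases x i <;> cases y i <;> norm_num
  simp_rw [h]
  rw [Finset.sum_add_distrib, Finset.sum_sub_distrib, Finset.sum_sub_distrib, ← Finset.mul_sum,
    ← Finset.mul_sum, ← Finset.mul_sum, ← Finset.sum_filter, ← Finset.sum_filter,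
    ← Finset.sum_filter, Finset.filter_and]
  simp [plusSet]

lemma mag_iff {n : ℕ} (hn : 0 < n) (x : Fin n → Bool) (μ : ℝ) (k : ℕ)
    (hk : ((2 * n : ℕ) : ℝ) * (1 + μ) / 4 = k) :
    (2 / (2 * n : ℝ)) * ∑ i, spinVal (x i) = μ ↔ x ∈ confK n k := by
  have hn' : (0:ℝ) < n := by exact_mod_cast hn
  rw [sum_spin, confK, Finset.mem_filter]
  simp only [Finset.mem_univ, true_and]
  rw [← Nat.cast_inj (R := ℝ), ← hk]
  push_cast
  constructor
  · rintro rfl; field_simp; ring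
  · intro h; rw [h]; field_simp; ring

lemma sum_Omega {n : ℕ} (hn : 0 < n) (μ₁ μ₂ : ℝ) (k l : ℕ)
    (hk : ((2 * n : ℕ) : ℝ) * (1 + μ₁) / 4 = k) (hl : ((2 * n : ℕ) : ℝ) * (1 + μ₂) / 4 = l)
    (g : TwoConf n → ℝ) :
    ∑ σ : TwoConf n, {σ : TwoConf n | mag1 n σ = μ₁ ∧ mag2 n σ = μ₂}.indicator g σ
      = ∑ y ∈ confK n l, ∑ x ∈ confK n k, g (x, y) := by
  classical
  have hs : {σ : TwoConf n | mag1 n σ = μ₁ ∧ mag2 n σ = μ₂}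
      = ((confK n k ×ˢ confK n l : Finset (TwoConf n)) : Set (TwoConf n)) := by
    ext σ
    simp only [Set.mem_ofPred_eq, Finset.mem_coe, Finset.mem_product]
    rw [← mag_iff hn σ.1 μ₁ k hk, ← mag_iff hn σ.2 μ₂ l hl]
    rfl
  rw [hs, Finset.sum_indicator_subset _ (Finset.subset_univ _), Finset.sum_product_right]

lemma inner_upper {n : ℕ} (k : ℕ) (hk : k ≤ n) (a : ℝ) (ha : 0 ≤ a)
    (y : Fin n → Bool) :
    ∑ x ∈ confK n k, Real.exp (a * ∑ i, spinVal (x i) * spinVal (y i))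
      ≤ n.choose k * Real.exp (a * (- 2 * k - 2 * (plusSet y).card + n)
          + (plusSet y).card * ((Real.exp (4 * a) - 1) * ((k : ℝ) / n))) := by
  have h1 : ∀ x ∈ confK n k, Real.exp (a * ∑ i, spinVal (x i) * spinVal (y i))
      = Real.exp (a * (- 2 * k - 2 * (plusSet y).card + n))
        * (1 + (Real.exp (4 * a) - 1)) ^ (plusSet x ∩ plusSet y).card := by
    intro x hx
    have hx' : (plusSet x).card = k := by simpa [confK] using hx
    rw [sum_spin_mul, hx', add_sub_cancel, ← Real.exp_nat_mul, ← Real.exp_add]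
    congr 1; ring
  have hc : 0 ≤ Real.exp (4 * a) - 1 := by
    have := Real.add_one_le_exp (4 * a); linarith
  rw [Finset.sum_congr rfl h1, ← Finset.mul_sum,
    sum_confK n k (fun s => (1 + (Real.exp (4 * a) - 1)) ^ (s ∩ plusSet y).card)]
  have h2 := upper_sum n k hk (plusSet y) _ hc
  have h3 : (1 + (Real.exp (4 * a) - 1) * ((k : ℝ) / n)) ^ (plusSet y).card
      ≤ Real.exp ((plusSet y).card * ((Real.exp (4 * a) - 1) * ((k : ℝ) / n))) := by
    rw [Real.exp_nat_mul]
    have := Real.add_one_le_exp ((Real.exp (4 * a) - 1) * ((k : ℝ) / n))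
    have h0 : 0 ≤ (Real.exp (4 * a) - 1) * ((k : ℝ) / n) := by positivity
    gcongr; linarith
  rw [Real.exp_add]
  have hC : (0:ℝ) ≤ n.choose k := by positivity
  calc _ ≤ Real.exp (a * (- 2 * k - 2 * (plusSet y).card + n)) * (n.choose k *
        Real.exp ((plusSet y).card * ((Real.exp (4 * a) - 1) * ((k : ℝ) / n)))) := by
        gcongr
        exact h2.trans (mul_le_mul_of_nonneg_left h3 hC)
    _ = _ := by ring

lemma inner_lower {n : ℕ} (hn : 0 < n) (k : ℕ) (hk : k ≤ n) (a : ℝ)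
    (y : Fin n → Bool) (M : ℝ)
    (hM : M = 4 * ((k : ℝ) / n * (plusSet y).card) - 2 * k - 2 * (plusSet y).card + n) :
    n.choose k * Real.exp (a * M)
      ≤ ∑ x ∈ confK n k, Real.exp (a * ∑ i, spinVal (x i) * spinVal (y i)) := by
  have h1 : ∀ x ∈ confK n k, Real.exp (a * M) * (1 + a * (4 * ((plusSet x ∩ plusSet y).card : ℝ)
        - 4 * ((k : ℝ) / n * (plusSet y).card)))
      ≤ Real.exp (a * ∑ i, spinVal (x i) * spinVal (y i)) := by
    intro x hx
    have hx' : (plusSet x).card = k := by simpa [confK] using hx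
    rw [sum_spin_mul, hx']
    have : a * (4 * ((plusSet x ∩ plusSet y).card : ℝ) - 2 * k - 2 * (plusSet y).card + n)
      = a * M + a * (4 * ((plusSet x ∩ plusSet y).card : ℝ)
        - 4 * ((k : ℝ) / n * (plusSet y).card)) := by rw [hM]; ring
    rw [this, Real.exp_add]
    have := Real.add_one_le_exp (a * (4 * ((plusSet x ∩ plusSet y).card : ℝ)
        - 4 * ((k : ℝ) / n * (plusSet y).card)))
    gcongr; linarith
  refine le_trans (le_of_eq ?_) (Finset.sum_le_sum h1)
  rw [← Finset.mul_sum, Finset.sum_add_distrib, ← Finset.mul_sum, Finset.sum_sub_distrib,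
    ← Finset.mul_sum, sum_confK n k (fun s => ((s ∩ plusSet y).card : ℝ)), mean_sum n k hn hk]
  simp only [Finset.sum_const, nsmul_eq_mul, card_confK]
  ring

lemma exp_quad (x : ℝ) (h0 : 0 ≤ x) (h1 : x ≤ 1) : Real.exp x - 1 ≤ x + x ^ 2 := by
  have := Real.abs_exp_sub_one_sub_id_le (x := x) (by rw [abs_of_nonneg h0]; exact h1)
  have := (abs_le.1 this).2
  linarith

lemma main_bound {n : ℕ} (hn : 0 < n) (μ₁ μ₂ : ℝ) (k l : ℕ) (hkn : k ≤ n) (hln : l ≤ n)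
    (hk : ((2 * n : ℕ) : ℝ) * (1 + μ₁) / 4 = k) (hl : ((2 * n : ℕ) : ℝ) * (1 + μ₂) / 4 = l)
    (a : ℝ) (ha : 0 ≤ a) (ha1 : 4 * a ≤ 1) :
    |Real.log (nuExp n μ₁ μ₂ (fun σ => Real.exp (a * ∑ i, spinVal (σ.1 i) * spinVal (σ.2 i))))
      - a * n * (μ₁ * μ₂)| ≤ n * (16 * a ^ 2) := by
  have hn' : (0:ℝ) < n := by exact_mod_cast hn
  have hkn' : (k:ℝ) ≤ n := by exact_mod_cast hkn
  have hln' : (l:ℝ) ≤ n := by exact_mod_cast hln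
  unfold nuExp
  rw [sum_Omega hn μ₁ μ₂ k l hk hl, sum_Omega hn μ₁ μ₂ k l hk hl]
  simp only [Finset.sum_const, nsmul_eq_mul, card_confK, mul_one]
  have hCk : (0:ℝ) < n.choose k := by exact_mod_cast Nat.choose_pos hkn
  have hCl : (0:ℝ) < n.choose l := by exact_mod_cast Nat.choose_pos hln
  have e1 : μ₁ = 2 * k / n - 1 := by
    rw [← hk]; push_cast; field_simp; ring
  have e2 : μ₂ = 2 * l / n - 1 := by
    rw [← hl]; push_cast; field_simp; ring
  set W := ∑ y ∈ confK n l, ∑ x ∈ confK n k,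
    Real.exp (a * ∑ i, spinVal (x i) * spinVal (y i)) with hW
  have hcard : ∀ y ∈ confK n l, (plusSet y).card = l := by
    intro y hy; simpa [confK] using hy
  have lower : n.choose l * (n.choose k * Real.exp (a * n * (μ₁ * μ₂))) ≤ W := by
    rw [← card_confK n l, ← nsmul_eq_mul, ← Finset.sum_const]
    refine Finset.sum_le_sum (fun y hy => ?_)
    have := inner_lower hn k hkn a y (n * (μ₁ * μ₂)) (by
      rw [hcard y hy, e1, e2]; field_simp; ring)
    rwa [← mul_assoc] at this
  have upper : W ≤ n.choose l * (n.choose k *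
      Real.exp (a * n * (μ₁ * μ₂) + n * (16 * a ^ 2))) := by
    rw [← card_confK n l, ← nsmul_eq_mul, ← Finset.sum_const]
    refine Finset.sum_le_sum (fun y hy => ?_)
    refine (inner_upper k hkn a ha y).trans ?_
    rw [hcard y hy]
    refine mul_le_mul_of_nonneg_left (Real.exp_le_exp.2 ?_) hCk.le
    have hq := exp_quad (4 * a) (by linarith) ha1
    have hlk : (l:ℝ) * (k / n) ≤ n := by
      have : (k:ℝ)/n ≤ 1 := by rw [div_le_one hn']; exact hkn'
      have h0 : (0:ℝ) ≤ (k:ℝ)/n := by positivity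
      nlinarith
    have hlk0 : (0:ℝ) ≤ (l:ℝ) * (k / n) := by positivity
    have key : a * n * (μ₁ * μ₂) = a * (-2 * k - 2 * l + n) + (l * (k/n)) * (4 * a) := by
      rw [e1, e2]; field_simp; ring
    rw [key]
    have h5 : (l * ((k:ℝ)/n)) * (Real.exp (4 * a) - 1) ≤ (l * (k/n)) * (4 * a + (4 * a)^2) :=
      mul_le_mul_of_nonneg_left hq hlk0
    have h6 : (l * ((k:ℝ)/n)) * (4 * a)^2 ≤ n * (4 * a)^2 :=
      mul_le_mul_of_nonneg_right hlk (by positivity)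
    nlinarith
  have hq1 : Real.exp (a * n * (μ₁ * μ₂)) ≤ W / (n.choose l * n.choose k) := by
    rw [le_div_iff₀ (by positivity)]; linarith
  have hq2 : W / (n.choose l * n.choose k) ≤ Real.exp (a * n * (μ₁ * μ₂) + n * (16 * a ^ 2)) := by
    rw [div_le_iff₀ (by positivity)]; linarith
  have hpos : 0 < W / (n.choose l * n.choose k) := lt_of_lt_of_le (Real.exp_pos _) hq1
  have l1 := (Real.le_log_iff_exp_le hpos).2 hq1
  have l2 := (Real.log_le_iff_le_exp hpos).2 hq2
  have : (0:ℝ) ≤ n * (16 * a ^ 2) := by positivity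
  rw [abs_le]; constructor <;> linarith

lemma k_le {n : ℕ} (μ : ℝ) (k : ℕ) (hμ : μ ≤ 1)
    (hk : ((2 * n : ℕ) : ℝ) * (1 + μ) / 4 = k) : k ≤ n := by
  have : (k : ℝ) ≤ n := by
    rw [← hk]; push_cast
    have : (0:ℝ) ≤ n := by positivity
    nlinarith
  exact_mod_cast this

lemma typ_le (m μ e : ℝ) (s : Bool) (hm : |m| + e ≤ 1)
    (h : |μ - (if s then m else -m)| < e) : μ ≤ 1 := by
  have h1 := (abs_lt.1 h).2
  have h2 := le_abs_self m
  have h3 := neg_abs_le m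
  cases s <;> simp at h1 <;> linarith

lemma tendsto_rpow_two_mul (r : ℝ) (hr : 0 < r) :
    Tendsto (fun n : ℕ => ((2 * n : ℕ) : ℝ) ^ (-r)) atTop (nhds 0) := by
  refine (tendsto_rpow_neg_atTop hr).comp (tendsto_natCast_atTop_atTop.comp ?_)
  exact tendsto_atTop_mono (fun n => by omega : ∀ n : ℕ, n ≤ 2 * n) tendsto_id

/-- Corollary 3.4 (uniform tilted expectation asymptotics): for `β > 2`, `α_N = N^{−ρ}`
with `ρ > 0`, and `0 < κ < 1/2`, writing `S(σ) = ∑_{i∈B₁} σᵢσ_{i+N/2}`, one has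
`log E_{ν_N^{μ₁,μ₂}}[exp(α_N S)] = (α_N N / 2) μ₁μ₂ + o(α_N N)` uniformly over all
admissible `(μ₁, μ₂) ∈ A_κ^N`; equivalently, for every `δ > 0`, eventually in `N` (even)
`|log E[exp(α_N S)] − (α_N N/2) μ₁μ₂| ≤ δ α_N N` for all such pairs. -/
theorem tilted_expectation_uniform (β ρ κ : ℝ) (hβ : 2 < β) (hρ : 0 < ρ)
    (hκ0 : 0 < κ) (hκ : κ < 1 / 2)
    (mp : ℝ) (hfix : mp = Real.tanh (β / 2 * mp))
    (hmax : ∀ z : ℝ, z = Real.tanh (β / 2 * z) → z ≤ mp)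
    (δ : ℝ) (hδ : 0 < δ) :
    ∀ᶠ n : ℕ in atTop,
      ∀ μ₁ μ₂ : ℝ, memTyp mp κ (2 * n) (μ₁, μ₂) → admissible (2 * n) μ₁ μ₂ →
        |Real.log (nuExp n μ₁ μ₂ (fun σ =>
              Real.exp ((((2 * n : ℕ) : ℝ) ^ (-ρ)) *
                ∑ i, spinVal (σ.1 i) * spinVal (σ.2 i)))) -
            (((2 * n : ℕ) : ℝ) ^ (-ρ)) * ((2 * n : ℕ) : ℝ) / 2 * (μ₁ * μ₂)|
          ≤ δ * ((((2 * n : ℕ) : ℝ) ^ (-ρ)) * ((2 * n : ℕ) : ℝ)) := by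
  have hmp : |mp| < 1 := by
    rw [hfix]; exact Real.abs_tanh_lt_one _
  have hε : 0 < min (1/4) (δ / 8) := by positivity
  filter_upwards [eventually_gt_atTop 0,
    (tendsto_rpow_two_mul κ hκ0).eventually_lt_const (sub_pos.2 hmp),
    (tendsto_rpow_two_mul ρ hρ).eventually_lt_const hε] with n hn h1 h2
  rintro μ₁ μ₂ ⟨s₁, s₂, ht1, ht2⟩ ⟨⟨k, hk⟩, ⟨l, hl⟩⟩
  have hkn := k_le μ₁ k (typ_le mp μ₁ _ s₁ (by linarith) ht1) hk
  have hln := k_le μ₂ l (typ_le mp μ₂ _ s₂ (by linarith) ht2) hl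
  set a := ((2 * n : ℕ) : ℝ) ^ (-ρ) with ha
  have ha0 : 0 ≤ a := by positivity
  obtain ⟨h3, h4⟩ := lt_min_iff.1 h2
  have hb := main_bound hn μ₁ μ₂ k l hkn hln hk hl a ha0 (by linarith)
  have e : a * ((2 * n : ℕ) : ℝ) / 2 * (μ₁ * μ₂) = a * n * (μ₁ * μ₂) := by push_cast; ring
  rw [e]
  refine hb.trans ?_
  push_cast
  have hn' : (0:ℝ) ≤ n := by positivity
  have : a * (8 * a) ≤ a * δ := mul_le_mul_of_nonneg_left (by linarith) ha0
  nlinarith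

end
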